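/- Let G be a group generated by a finite set, acting k-acylindrically and without edge inversions on a simplicial tree T for some nonnegative integer k. Assume no vertex of T is fixed by every element of G and that some line of T is invariant under G. Then G is virtually cyclic; more precisely, G contains an infinite cyclic subgroup of index at most 2 (G is isomorphic to ℤ or to the semidirect product ℤ ⋊ ℤ/2ℤ). -/

import Mathlib

open SimpleGraph Pointwise

section TreeDefs

variable {G : Type*} [Group G]

/-- The action of `G` on the vertices preserves adjacency. -/
def ActsByAut (G : Type*) [Group G] {V : Type*} [MulAction G V] (T : SimpleGraph V) : Prop :=
  ∀ (g : G) (v w : V), T.Adj v w → T.Adj (g • v) (g • w)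

/-- The action has no edge inversions: no element swaps the endpoints of an edge. -/
def NoEdgeInversion (G : Type*) [Group G] {V : Type*} [MulAction G V] (T : SimpleGraph V) : Prop :=
  ∀ (g : G) (v w : V), T.Adj v w → ¬(g • v = w ∧ g • w = v)

/-- The set of vertices fixed by `g`. -/
def Fixed (V : Type*) [MulAction G V] (g : G) : Set V := {v | g • v = v}

/-- `g` is elliptic: it fixes some vertex. -/
def IsElliptic (V : Type*) [MulAction G V] (g : G) : Prop := ∃ v : V, g • v = v

/-- `g` is hyperbolic: it fixes no vertex. -/
def IsHyperbolic (V : Type*) [MulAction G V] (g : G) : Prop := ¬ ∃ v : V, g • v = v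

/-- Translation length of `g`: the infimum of `d(v, g • v)` over all vertices `v`. -/
noncomputable def transLen {V : Type*} [MulAction G V] (T : SimpleGraph V) (g : G) : ℕ :=
  ⨅ v : V, T.dist v (g • v)

/-- The axis of a (hyperbolic) element: the vertices moved exactly the translation length. -/
noncomputable def Axis {V : Type*} [MulAction G V] (T : SimpleGraph V) (g : G) : Set V :=
  {v | T.dist v (g • v) = transLen T g}

/-- Diameter (in `ℕ∞`) of a set of vertices: the sup of pairwise simplicial distances. -/
noncomputable def setDiam {V : Type*} (T : SimpleGraph V) (S : Set V) : ℕ∞ :=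
  ⨆ v ∈ S, ⨆ w ∈ S, (T.dist v w : ℕ∞)

/-- Minimal simplicial distance between two sets of vertices. -/
noncomputable def setDist {V : Type*} (T : SimpleGraph V) (A B : Set V) : ℕ :=
  sInf {n : ℕ | ∃ v ∈ A, ∃ w ∈ B, T.dist v w = n}

/-- The action of `G` on `T` is `k`-acylindrical: the fixed-point set of every nontrivial
elliptic element has diameter at most `k`. -/
def AcylindricalAction {V : Type*} (T : SimpleGraph V) (G : Type*) [Group G] [MulAction G V]
    (k : ℕ) : Prop :=
  ∀ g : G, g ≠ 1 → IsElliptic V g → setDiam T (Fixed V g) ≤ (k : ℕ∞)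

/-- `a` and `b` generate a rank 2 free product in `G`: the canonical homomorphism
`⟨a⟩ ∗ ⟨b⟩ → G` from the free product of the cyclic subgroups generated by `a` and `b`
is injective. -/
def IsRank2FreeProduct {G : Type*} [Group G] (a b : G) : Prop :=
  Function.Injective
    (Monoid.Coprod.lift (Subgroup.zpowers a).subtype (Subgroup.zpowers b).subtype)

/-- `a` and `b` freely generate a rank 2 free subgroup of `G`: the homomorphism from the
free group on two generators sending the generators to `a` and `b` is injective. -/
def FreelyGeneratesFreeSubgroup {G : Type*} [Group G] (a b : G) : Prop :=
  Function.Injective ((FreeGroup.lift (fun i : Bool => if i then a else b)) : FreeGroup Bool →* G)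

/-- `a` and `b` freely generate a rank 2 free subsemigroup of `G`: the monoid homomorphism
from the free monoid on two generators sending the generators to `a` and `b` is injective. -/
def FreelyGeneratesFreeSubsemigroup {G : Type*} [Monoid G] (a b : G) : Prop :=
  Function.Injective ((FreeMonoid.lift (fun i : Bool => if i then a else b)) : FreeMonoid Bool →* G)

/-- A line in a simplicial tree: the image of an isometric embedding of `ℤ`. -/
def IsLine {V : Type*} (T : SimpleGraph V) (L : Set V) : Prop :=
  ∃ f : ℤ → V, (∀ m n : ℤ, T.dist (f m) (f n) = (m - n).natAbs) ∧ L = Set.range f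

end TreeDefs

/-!
Since `G` preserves the line `L ≅ ℤ`, it acts on `ℤ` by isometries, and this action is faithful: an
element fixing `L` pointwise has a fixed-point set of infinite diameter, so acylindricity makes it
trivial. Hence `G` embeds in the isometry group of `ℤ`, in which the translations form an infinite
cyclic subgroup of index two, and the elements of `G` acting as translations form a cyclic subgroup
`⟨h⟩` of index at most two. If `h` had finite order it would be trivial, so `G` would have order at
most two; its generator would then be trivial or a reflection of `ℤ`, and a reflection either fixes
an integer or swaps two consecutive ones. The first gives a fixed vertex, the second an inversion.
-/

section IntIsometries

theorem isometry_int_iff_natAbs {e : ℤ → ℤ} :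
    Isometry e ↔ ∀ m n, (e m - e n).natAbs = (m - n).natAbs := by
  simp only [isometry_iff_dist_eq, Int.dist_eq', Int.abs_eq_natAbs, Int.cast_natCast, Nat.cast_inj]

theorem isometry_int_eq_add_or_eq_sub {e : ℤ → ℤ} (he : Isometry e) :
    (∀ n, e n = n + e 0) ∨ (∀ n, e n = e 0 - n) := by
  have hdist := isometry_int_iff_natAbs.1 he
  have step : e 1 - e 0 = 1 ∨ e 1 - e 0 = -1 := by
    have := hdist 1 0
    omega
  refine step.imp (fun h n => ?_) (fun h n => ?_) <;>
  · have := hdist n 0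
    have := hdist n 1
    omega

/-- The embedding of `ℤ` into its own isometry group sending `c` to `n ↦ n + c`. The source is
written multiplicatively because `ℤ ≃ᵢ ℤ` is a group under composition. -/
def intTranslation : Multiplicative ℤ →* (ℤ ≃ᵢ ℤ) where
  toFun c := IsometryEquiv.addRight c.toAdd
  map_one' := by ext n; simp
  map_mul' a b := by ext n; simp [add_comm, add_left_comm]

theorem intTranslation_apply (c : Multiplicative ℤ) (n : ℤ) :
    intTranslation c n = n + c.toAdd := rfl

theorem intTranslation_injective : Function.Injective intTranslation := fun a b h => by
  simpa [intTranslation_apply] using DFunLike.congr_fun h 0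

theorem mem_range_intTranslation_iff {e : ℤ ≃ᵢ ℤ} :
    e ∈ intTranslation.range ↔ ∀ n, e n = n + e 0 := by
  constructor
  · rintro ⟨c, rfl⟩ n
    simp [intTranslation_apply]
  · exact fun h => ⟨.ofAdd (e 0), IsometryEquiv.ext fun n => (h n).symm⟩

theorem eq_sub_of_notMem_range_intTranslation {e : ℤ ≃ᵢ ℤ} (he : e ∉ intTranslation.range) :
    ∀ n, e n = e 0 - n :=
  (isometry_int_eq_add_or_eq_sub e.isometry).resolve_left (mt mem_range_intTranslation_iff.2 he)

theorem index_range_intTranslation : intTranslation.range.index = 2 := by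
  refine Subgroup.index_eq_two_iff_exists_notMem_and.2 ⟨IsometryEquiv.neg ℤ, fun h => ?_, ?_⟩
  · simpa using mem_range_intTranslation_iff.1 h 1
  · refine fun e => or_iff_not_imp_right.2 fun he => mem_range_intTranslation_iff.2 fun n => ?_
    have hneg := eq_sub_of_notMem_range_intTranslation he (-n)
    simp only [IsometryEquiv.mul_apply, IsometryEquiv.neg_apply, neg_zero]
    omega

theorem eq_one_of_mem_range_intTranslation_of_isOfFinOrder {e : ℤ ≃ᵢ ℤ}
    (he : e ∈ intTranslation.range) (hfin : IsOfFinOrder e) : e = 1 := by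
  obtain ⟨c, rfl⟩ := he
  rw [intTranslation_injective.isOfFinOrder_iff, isOfFinOrder_iff_eq_one] at hfin
  rw [hfin, map_one]

theorem exists_fixed_or_swap_of_isOfFinOrder {e : ℤ ≃ᵢ ℤ} (hfin : IsOfFinOrder e) :
    (∃ n, e n = n) ∨ ∃ n, e n = n + 1 ∧ e (n + 1) = n := by
  by_cases he : e ∈ intTranslation.range
  · exact .inl ⟨0, by rw [eq_one_of_mem_range_intTranslation_of_isOfFinOrder he hfin]; rfl⟩
  · have hrefl := eq_sub_of_notMem_range_intTranslation he
    obtain ⟨m, hm | hm⟩ := Int.even_or_odd' (e 0)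
    · exact .inl ⟨m, by rw [hrefl]; omega⟩
    · exact .inr ⟨m, by rw [hrefl]; omega, by rw [hrefl]; omega⟩

variable {G : Type*} [Group G] {ρ : G →* (ℤ ≃ᵢ ℤ)}

theorem exists_zpowers_eq_comap_range_intTranslation (hρ : Function.Injective ρ) :
    ∃ h : G, Subgroup.zpowers h = intTranslation.range.comap ρ := by
  have : IsCyclic intTranslation.range :=
    isCyclic_of_surjective _ intTranslation.rangeRestrict_surjective
  have hinj : Function.Injective (ρ.subgroupComap intTranslation.range) := fun a b hab =>
    Subtype.ext (hρ (congrArg Subtype.val hab))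
  exact (Subgroup.isCyclic_iff_exists_zpowers_eq_top _).1 (isCyclic_of_injective _ hinj)

theorem index_comap_range_intTranslation_dvd_two (ρ : G →* (ℤ ≃ᵢ ℤ)) :
    (intTranslation.range.comap ρ).index ∣ 2 := by
  have := Subgroup.normal_of_index_eq_two index_range_intTranslation
  rw [Subgroup.index_comap, ← index_range_intTranslation]
  exact Subgroup.relIndex_dvd_index_of_normal _ _

theorem exists_fixed_of_finite_of_isCyclic [Finite G] [IsCyclic G]
    (hswap : ∀ g n, ¬(ρ g n = n + 1 ∧ ρ g (n + 1) = n)) : ∃ n, ∀ g, ρ g n = n := by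
  obtain ⟨a, ha⟩ := IsCyclic.exists_generator (α := G)
  obtain ⟨n, hn⟩ | ⟨n, hn⟩ :=
    exists_fixed_or_swap_of_isOfFinOrder (ρ.isOfFinOrder (isOfFinOrder_of_finite a))
  · refine ⟨n, fun g => ?_⟩
    obtain ⟨i, rfl : a ^ i = g⟩ := mem_powers_iff_mem_zpowers.2 (ha g)
    induction i with
    | zero => rw [pow_zero, map_one, IsometryEquiv.coe_one, id]
    | succ i ih => rw [pow_succ, map_mul, IsometryEquiv.mul_apply, hn, ih]
  · exact absurd hn (hswap a n)

theorem exists_not_isOfFinOrder_index_zpowers_dvd_two (hρ : Function.Injective ρ)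
    (hfix : ¬∃ n, ∀ g, ρ g n = n) (hswap : ∀ g n, ¬(ρ g n = n + 1 ∧ ρ g (n + 1) = n)) :
    ∃ h : G, ¬IsOfFinOrder h ∧ (Subgroup.zpowers h).index ∣ 2 := by
  obtain ⟨h, hh⟩ := exists_zpowers_eq_comap_range_intTranslation hρ
  have hindex : (Subgroup.zpowers h).index ∣ 2 :=
    hh ▸ index_comap_range_intTranslation_dvd_two ρ
  refine ⟨h, fun hfin => hfix ?_, hindex⟩
  have hmem : ρ h ∈ intTranslation.range :=
    Subgroup.mem_comap.1 (hh ▸ Subgroup.mem_zpowers h)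
  have hone : h = 1 := hρ <| by
    rw [eq_one_of_mem_range_intTranslation_of_isOfFinOrder hmem (ρ.isOfFinOrder hfin), map_one]
  rw [hone, Subgroup.zpowers_one_eq_bot, Subgroup.index_bot] at hindex
  have : Finite G := Nat.finite_of_card_ne_zero (ne_zero_of_dvd_ne_zero two_ne_zero hindex)
  have : IsCyclic G := isCyclic_of_card_dvd_prime hindex
  exact exists_fixed_of_finite_of_isCyclic hswap

end IntIsometries

section GraphAutomorphisms

variable {V W : Type*} {T : SimpleGraph V} {T' : SimpleGraph W}

theorem edist_hom_apply_le (φ : T →g T') (v w : V) : T'.edist (φ v) (φ w) ≤ T.edist v w :=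
  le_iInf fun p => (edist_le (p.map φ)).trans_eq (by rw [Walk.length_map])

theorem dist_iso_apply (φ : T ≃g T') (v w : V) : T'.dist (φ v) (φ w) = T.dist v w := by
  have hle : T.edist v w ≤ T'.edist (φ v) (φ w) := by
    simpa using edist_hom_apply_le φ.symm.toHom (φ v) (φ w)
  exact congrArg ENat.toNat ((edist_hom_apply_le φ.toHom v w).antisymm hle)

theorem ActsByAut.dist_smul {G : Type*} [Group G] [MulAction G V] (hAct : ActsByAut G T)
    (g : G) (v w : V) : T.dist (g • v) (g • w) = T.dist v w :=
  dist_iso_apply (T := T) (T' := T) ⟨MulAction.toPerm g, fun {a b} =>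
    ⟨fun h => by simpa using hAct g⁻¹ _ _ h, hAct g a b⟩⟩ v w

theorem dist_le_setDiam {S : Set V} {v w : V} (hv : v ∈ S) (hw : w ∈ S) :
    (T.dist v w : ℕ∞) ≤ setDiam T S :=
  le_iSup₂_of_le v hv (le_iSup₂_of_le w hw le_rfl)

end GraphAutomorphisms

/-- An isometric parametrization `f : ℤ → V` of a line of the graph `T`, as in `IsLine`. -/
def IsBiinfiniteGeodesic {V : Type*} (T : SimpleGraph V) (f : ℤ → V) : Prop :=
  ∀ m n : ℤ, T.dist (f m) (f n) = (m - n).natAbs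

namespace IsBiinfiniteGeodesic

variable {G V : Type*} [Group G] [MulAction G V] {T : SimpleGraph V} {f : ℤ → V}

theorem injective (hf : IsBiinfiniteGeodesic T f) : Function.Injective f := fun m n h => by
  have hdist := hf m n
  rw [h, dist_self] at hdist
  omega

theorem adj_succ (hf : IsBiinfiniteGeodesic T f) (n : ℤ) : T.Adj (f n) (f (n + 1)) := by
  rw [← dist_eq_one_iff_adj, hf]
  omega

theorem isometry_of_semiconj (hf : IsBiinfiniteGeodesic T f) (hAct : ActsByAut G T) {g : G}
    {e : ℤ → ℤ} (he : ∀ n, f (e n) = g • f n) : Isometry e := by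
  refine isometry_int_iff_natAbs.2 fun m n => ?_
  rw [← hf, he, he, hAct.dist_smul, hf]

theorem exists_hom_isometryEquiv (hf : IsBiinfiniteGeodesic T f) (hAct : ActsByAut G T)
    (hinv : ∀ g : G, g • Set.range f = Set.range f) :
    ∃ ρ : G →* (ℤ ≃ᵢ ℤ), ∀ g n, f (ρ g n) = g • f n := by
  have hmem (g : G) (n : ℤ) : g • f n ∈ Set.range f :=
    hinv g ▸ Set.smul_mem_smul_set (Set.mem_range_self n)
  choose e he using hmem
  have he_inv (a b : G) (hab : a * b = 1) (n : ℤ) : e a (e b n) = n :=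
    hf.injective (by rw [he, he, ← mul_smul, hab, one_smul])
  let ρ (g : G) : ℤ ≃ᵢ ℤ :=
    { toFun := e g
      invFun := e g⁻¹
      left_inv := he_inv _ _ (inv_mul_cancel g)
      right_inv := he_inv _ _ (mul_inv_cancel g)
      isometry_toFun := hf.isometry_of_semiconj hAct (he g) }
  refine ⟨MonoidHom.mk' ρ fun a b => IsometryEquiv.ext fun n => hf.injective ?_, he⟩
  change f (e (a * b) n) = f (e a (e b n))
  rw [he, he, he, mul_smul]

theorem eq_one_of_forall_smul_eq (hf : IsBiinfiniteGeodesic T f) {k : ℕ}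
    (hAcyl : AcylindricalAction T G k) {g : G} (hg : ∀ n, g • f n = f n) : g = 1 := by
  by_contra hne
  have hdist : (T.dist (f 0) (f (k + 1)) : ℕ∞) ≤ k :=
    (dist_le_setDiam (S := Fixed V g) (hg 0) (hg (k + 1))).trans (hAcyl g hne ⟨f 0, hg 0⟩)
  rw [hf, Nat.cast_le] at hdist
  omega

end IsBiinfiniteGeodesic

theorem statement10_general {G V : Type*} [Group G] [MulAction G V] {T : SimpleGraph V}
    (hAct : ActsByAut G T) (hNoInv : NoEdgeInversion G T) {k : ℕ}
    (hAcyl : AcylindricalAction T G k) {L : Set V} (hline : IsLine T L)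
    (hinv : ∀ g : G, g • L = L) (hnofix : ¬∃ v ∈ L, ∀ g : G, g • v = v) :
    ∃ h : G, ¬IsOfFinOrder h ∧ 0 < (Subgroup.zpowers h).index ∧
      (Subgroup.zpowers h).index ≤ 2 := by
  obtain ⟨f, hf : IsBiinfiniteGeodesic T f, rfl⟩ := hline
  obtain ⟨ρ, hρ⟩ := hf.exists_hom_isometryEquiv hAct hinv
  have hρ_inj : Function.Injective ρ := (injective_iff_map_eq_one ρ).2 fun g hg =>
    hf.eq_one_of_forall_smul_eq hAcyl fun n => by rw [← hρ, hg, IsometryEquiv.coe_one, id]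
  have hfix : ¬∃ n, ∀ g, ρ g n = n := fun ⟨n, hn⟩ =>
    hnofix ⟨f n, Set.mem_range_self n, fun g => by rw [← hρ, hn]⟩
  have hswap (g : G) (n : ℤ) : ¬(ρ g n = n + 1 ∧ ρ g (n + 1) = n) := fun ⟨hup, hdown⟩ =>
    hNoInv g _ _ (hf.adj_succ n) ⟨by rw [← hρ, hup], by rw [← hρ, hdown]⟩
  obtain ⟨h, hord, hdvd⟩ := exists_not_isOfFinOrder_index_zpowers_dvd_two hρ_inj hfix hswap
  exact ⟨h, hord, Nat.pos_of_dvd_of_pos hdvd two_pos, Nat.le_of_dvd two_pos hdvd⟩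

/-- If `G` is finitely generated and acts `k`-acylindrically without edge
inversions on a simplicial tree, with no global fixed vertex but with an invariant line,
then `G` is virtually cyclic: it contains an infinite cyclic subgroup of index at most 2. -/
theorem statement10 {G V : Type*} [Group G] [MulAction G V] (T : SimpleGraph V)
    (hT : T.IsTree) (hAct : ActsByAut G T) (hNoInv : NoEdgeInversion G T)
    (k : ℕ) (hAcyl : AcylindricalAction T G k)
    (S : Finset G) (hgen : Subgroup.closure (S : Set G) = ⊤)
    (hnofix : ¬ ∃ v : V, ∀ g : G, g • v = v)
    (hline : ∃ L : Set V, IsLine T L ∧ ∀ g : G, g • L = L) :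
    ∃ h : G, ¬ IsOfFinOrder h ∧ 0 < (Subgroup.zpowers h).index ∧
      (Subgroup.zpowers h).index ≤ 2 := by
  obtain ⟨L, hL, hinv⟩ := hline
  exact statement10_general hAct hNoInv hAcyl hL hinv fun ⟨v, _, hv⟩ => hnofix ⟨v, hv⟩
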